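/- arXiv:2302.09241 — 3 statements merged into one kernel-verified Lean document; each statement's English description precedes it below -/
import Mathlib

section
/- Let n ≥ 1, let L ∈ ℝ^{n×n} be symmetric positive semidefinite with kernel exactly span{1_n} (the Laplacian of a connected undirected weighted graph), let k ≥ 0, let S ∈ ℝ^{n×n} be diagonal with positive diagonal entries, and let λ̄, ζ̄, Q̄ ∈ ℝ^n. If L·λ̄ = 0 and 0 = −k·L·λ̄ − L·ζ̄ + (S⁻¹·Q̄ − λ̄), then λ̄ = α_Q·1_n, where α_Q = (1/n)·1_nᵀ·S⁻¹·Q̄. -/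
open Matrix

/-!
The vector of ones annihilates `L` from the left, so it annihilates the whole Laplacian part
`k·L·λ̄ + L·ζ̄ = L·(k·λ̄ + ζ̄)` of the steady-state equation. Hence `λ̄` and `S⁻¹·Q̄` have the same
sum of coordinates, and as `λ̄` lies in the kernel of `L` it is constant, equal to their mean.
-/

theorem sum_mulVec_eq_zero {m n R : Type*} [Fintype m] [Fintype n] [Semiring R]
    {A : Matrix m n R} (hA : 1 ᵥ* A = 0) (x : n → R) : ∑ i, (A *ᵥ x) i = 0 := by
  rw [← one_dotProduct, dotProduct_mulVec, hA, zero_dotProduct]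

theorem sum_eq_sum_of_sub_eq_mulVec {m n R : Type*} [Fintype m] [Fintype n] [Ring R]
    {A : Matrix m n R} (hA : 1 ᵥ* A = 0) {x y : m → R} {z : n → R} (h : x - y = A *ᵥ z) :
    ∑ i, x i = ∑ i, y i := by
  have hsum : ∑ i, (x - y) i = 0 := h ▸ sum_mulVec_eq_zero hA z
  simpa only [Pi.sub_apply, Finset.sum_sub_distrib, sub_eq_zero] using hsum

theorem vecMul_eq_mulVec_of_isSymm {n R : Type*} [Fintype n] [NonUnitalCommSemiring R]
    {A : Matrix n n R} (hA : A.IsSymm) (x : n → R) : x ᵥ* A = A *ᵥ x := by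
  rw [← mulVec_transpose, hA.eq]

theorem eq_const_mean_of_eq_const {ι K : Type*} [Fintype ι] [DivisionRing K]
    (hι : (Fintype.card ι : K) ≠ 0) {x : ι → K} {c : K} (hx : x = fun _ => c) :
    x = fun _ => (1 / (Fintype.card ι : K)) * ∑ i, x i := by
  simp [hx, hι]

/-- `q` stands for `S⁻¹·Q̄`; the column condition `hLcol` is what weight balance means for the
Laplacian of a directed graph. -/
theorem stmt_1_general {ι K : Type*} [Fintype ι] [Field K] (hι : (Fintype.card ι : K) ≠ 0)
    {L : Matrix ι ι K} (hLcol : 1 ᵥ* L = 0)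
    (hLker : ∀ x : ι → K, L *ᵥ x = 0 → ∃ c : K, x = fun _ => c)
    {k : K} {lam zeta q : ι → K} (h1 : L *ᵥ lam = 0)
    (h2 : 0 = -(k • (L *ᵥ lam)) - L *ᵥ zeta + (q - lam)) :
    lam = fun _ => (1 / (Fintype.card ι : K)) * ∑ i, q i := by
  obtain ⟨c, hc⟩ := hLker lam h1
  have hdiff : q - lam = L *ᵥ (k • lam + zeta) := by
    rw [mulVec_add, mulVec_smul]
    linear_combination -h2
  rw [sum_eq_sum_of_sub_eq_mulVec hLcol hdiff]
  exact eq_const_mean_of_eq_const hι hc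

/-- Lemma 1, eq. (14b): steady-state primal variable is consensual.
`L` is the Laplacian of a connected undirected weighted graph: symmetric positive
semidefinite with kernel exactly `span{1_n}`. If `L·λ̄ = 0` and
`0 = −k·L·λ̄ − L·ζ̄ + (S⁻¹·Q̄ − λ̄)`, then `λ̄ = α_Q·1_n` with
`α_Q = (1/n)·1_nᵀ·S⁻¹·Q̄`. -/
theorem stmt_1 (n : ℕ) (hn : 1 ≤ n)
    (L : Matrix (Fin n) (Fin n) ℝ)
    (hLsym : L.IsSymm) (hLpsd : L.PosSemidef)
    (hLker : ∀ x : Fin n → ℝ, L *ᵥ x = 0 ↔ ∃ c : ℝ, x = fun _ => c)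
    (k : ℝ) (hk : 0 ≤ k)
    (S : Matrix (Fin n) (Fin n) ℝ) (s : Fin n → ℝ)
    (hS : S = Matrix.diagonal s) (hs : ∀ i, 0 < s i)
    (lam zeta Qbar : Fin n → ℝ)
    (h1 : L *ᵥ lam = 0)
    (h2 : (0 : Fin n → ℝ) = -(k • (L *ᵥ lam)) - L *ᵥ zeta + (S⁻¹ *ᵥ Qbar - lam)) :
    lam = fun _ => (1 / (n : ℝ)) * ∑ i, (S⁻¹ *ᵥ Qbar) i := by
  have hLcol : 1 ᵥ* L = 0 := (vecMul_eq_mulVec_of_isSymm hLsym 1).trans ((hLker 1).2 ⟨1, rfl⟩)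
  simpa using stmt_1_general (by simpa using Nat.ne_of_gt hn) hLcol (fun x => (hLker x).1) h1 h2
end

section
/- Let n ≥ 2, let L ∈ ℝ^{n×n} be symmetric positive semidefinite with kernel exactly span{1_n}, let k > 0 and τ_v > 0, set K = (I_n + k·L)⁻¹, let T ∈ ℝ^{n×n} be the matrix whose first row is (1/n, …, 1/n) and whose i-th row, for i = 2, …, n, has −1 in column i−1, +1 in column i, and zeros elsewhere, and let I_r = [0_{n−1} I_{n−1}] ∈ ℝ^{(n−1)×n}. Define R_ζ = −τ_v⁻¹·I_r·T·(L·K·L)·T⁻¹·I_rᵀ ∈ ℝ^{(n−1)×(n−1)}. Then every eigenvalue of R_ζ is a negative real number; in particular R_ζ is a Hurwitz matrix (all eigenvalues have negative real part) and is invertible. -/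
open Matrix

/-!
Put `A = I_r T`, `B = T⁻¹ I_rᵀ` and `M = L K L`, so that `R_ζ = -τ_v⁻¹ A M B`, `A B = 1` and `M` is
positive semidefinite. The rows of `A` take successive differences, hence
`ker A = span{1_n} = ker L = ker M`. Since `A` kills `1 - B A`, so does `M`; that is, `M = M B A`,
and after taking adjoints `M = Aᴴ Bᴴ M`. Therefore `A M B = (A Aᴴ) (Bᴴ M B)` is a product of two
positive definite matrices, which is invertible and has positive eigenvalues.
-/

section PositiveProducts

open scoped ComplexOrder MatrixOrder

variable {n 𝕜 : Type*} [RCLike 𝕜]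

lemma posDef_map_ofReal [Finite n] {P : Matrix n n ℝ} (hP : P.PosDef) :
    (P.map ((↑) : ℝ → 𝕜)).PosDef := by
  classical
  cases nonempty_fintype n
  have hunit : IsUnit (P.map ((↑) : ℝ → 𝕜)) := hP.isUnit.map (algebraMap ℝ 𝕜).mapMatrix
  refine PosSemidef.posDef_iff_isUnit ?_ |>.mpr hunit
  obtain ⟨C, rfl⟩ := CStarAlgebra.nonneg_iff_eq_star_mul_self.mp hP.posSemidef.nonneg
  have hmap : (star C * C).map ((↑) : ℝ → 𝕜) = (C.map (↑))ᴴ * C.map (↑) := by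
    ext i j
    simp [mul_apply]
  exact hmap ▸ posSemidef_conjTranspose_mul_self _

variable [Fintype n] [DecidableEq n] {P Q : Matrix n n 𝕜} {μ : 𝕜}

lemma nonneg_of_mem_spectrum_mul_of_posSemidef (hP : P.PosSemidef) (hQ : Q.PosSemidef)
    (hμ : μ ∈ spectrum 𝕜 (P * Q)) : 0 ≤ μ := by
  obtain rfl | hμ0 := eq_or_ne μ 0
  · exact le_rfl
  obtain ⟨E, rfl⟩ := CStarAlgebra.nonneg_iff_eq_star_mul_self.mp hQ.nonneg
  have hμ' : μ ∈ spectrum 𝕜 (E * P * Eᴴ) \ {0} := by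
    rw [mul_assoc, ← spectrum.nonzero_mul_comm, mul_assoc]
    exact ⟨hμ, hμ0⟩
  have hEPE : (E * P * Eᴴ).PosSemidef := hP.mul_mul_conjTranspose_same E
  exact (posSemidef_iff_isHermitian_and_spectrum_nonneg.mp hEPE).2 hμ'.1

lemma pos_of_mem_spectrum_mul_of_posDef (hP : P.PosDef) (hQ : Q.PosDef)
    (hμ : μ ∈ spectrum 𝕜 (P * Q)) : 0 < μ := by
  have hμ0 : μ ≠ 0 := by
    rintro rfl
    exact (spectrum.zero_mem_iff 𝕜).mp hμ (hP.isUnit.mul hQ.isUnit)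
  exact (nonneg_of_mem_spectrum_mul_of_posSemidef hP.posSemidef hQ.posSemidef hμ).lt_of_ne' hμ0

lemma re_neg_and_im_eq_zero_of_mem_spectrum_neg_mul {P Q : Matrix n n ℝ} (hP : P.PosDef)
    (hQ : Q.PosDef) {μ : ℂ} (hμ : μ ∈ spectrum ℂ ((-(P * Q)).map Complex.ofReal)) :
    μ.re < 0 ∧ μ.im = 0 := by
  have hmap : (-(P * Q)).map Complex.ofReal =
      -(P.map Complex.ofReal * Q.map Complex.ofReal) := by
    ext i j
    simp [mul_apply]
  rw [hmap, ← spectrum.neg_eq, Set.mem_neg] at hμ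
  have hpos : 0 < -μ :=
    pos_of_mem_spectrum_mul_of_posDef (posDef_map_ofReal hP) (posDef_map_ofReal hQ) hμ
  simpa [Complex.lt_def, eq_comm] using hpos

end PositiveProducts

section Compression

open scoped ComplexOrder

section Ring

variable {m n R : Type*} [Fintype m] [Fintype n] [Ring R]

lemma conjTranspose_mul_mul_mulVec_eq_zero_iff [StarRing R] [PartialOrder R] {K : Matrix m m R}
    (hK : K.PosDef) (B : Matrix m n R) (x : n → R) : (Bᴴ * K * B) *ᵥ x = 0 ↔ B *ᵥ x = 0 := by
  refine ⟨fun h => ?_, fun h => by rw [← mulVec_mulVec, h, mulVec_zero]⟩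
  have hform : star (B *ᵥ x) ⬝ᵥ K *ᵥ (B *ᵥ x) = star x ⬝ᵥ (Bᴴ * K * B) *ᵥ x := by
    simp only [star_mulVec, dotProduct_mulVec, vecMul_vecMul]
  by_contra hne
  exact (hK.dotProduct_mulVec_pos hne).ne' (by rw [hform, h, dotProduct_zero])

variable [DecidableEq m] {A : Matrix m n R} {B : Matrix n m R} {M : Matrix n n R}

lemma mul_mul_eq_self_of_ker_le (hAB : A * B = 1) (hker : ∀ x, A *ᵥ x = 0 → M *ᵥ x = 0) :
    M * B * A = M := by
  refine ext_iff_mulVec.mpr fun x => ?_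
  have hx : A *ᵥ ((B * A) *ᵥ x - x) = 0 := by
    rw [mulVec_sub, mulVec_mulVec, ← Matrix.mul_assoc, hAB, Matrix.one_mul, sub_self]
  rw [← sub_eq_zero, ← hker _ hx, mulVec_sub, mulVec_mulVec, Matrix.mul_assoc]

lemma mul_mul_eq_mul_conjTranspose_mul [StarRing R] (hM : M.IsHermitian) (hAB : A * B = 1)
    (hker : ∀ x, A *ᵥ x = 0 → M *ᵥ x = 0) : A * M * B = A * Aᴴ * (Bᴴ * M * B) := by
  have hABM : Aᴴ * (Bᴴ * M) = M := by
    simpa only [conjTranspose_mul, hM.eq] using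
      congrArg conjTranspose (mul_mul_eq_self_of_ker_le hAB hker)
  calc
    A * M * B = A * (Aᴴ * (Bᴴ * M)) * B := by rw [hABM]
    _ = A * Aᴴ * (Bᴴ * M * B) := by simp only [Matrix.mul_assoc]

end Ring

variable {m n 𝕜 : Type*} [Fintype m] [Fintype n] [RCLike 𝕜]

lemma posDef_conjTranspose_mul_mul_of_ker {M : Matrix m m 𝕜} (hM : M.PosSemidef)
    {B : Matrix m n 𝕜} (hMB : ∀ x, M *ᵥ B *ᵥ x = 0 → x = 0) : (Bᴴ * M * B).PosDef := by
  refine .of_dotProduct_mulVec_pos (hM.conjTranspose_mul_mul_same B).isHermitian fun x hx => ?_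
  have hform : star x ⬝ᵥ (Bᴴ * M * B) *ᵥ x = star (B *ᵥ x) ⬝ᵥ M *ᵥ B *ᵥ x := by
    simp only [star_mulVec, dotProduct_mulVec, vecMul_vecMul]
  rw [hform]
  exact (hM.dotProduct_mulVec_nonneg _).lt_of_ne' fun h =>
    hx (hMB x ((hM.dotProduct_mulVec_zero_iff _).mp h))

variable [DecidableEq m] {A : Matrix m n 𝕜} {B : Matrix n m 𝕜} {M : Matrix n n 𝕜}

lemma exists_posDef_mul_posDef_eq_mul_mul (hM : M.PosSemidef) (hAB : A * B = 1)
    (hker : ∀ x, M *ᵥ x = 0 ↔ A *ᵥ x = 0) :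
    ∃ P Q : Matrix m m 𝕜, P.PosDef ∧ Q.PosDef ∧ A * M * B = P * Q := by
  refine ⟨A * Aᴴ, Bᴴ * M * B, .mul_conjTranspose_self A ?_,
    posDef_conjTranspose_mul_mul_of_ker hM fun x hx => ?_,
    mul_mul_eq_mul_conjTranspose_mul hM.isHermitian hAB fun x => (hker x).mpr⟩
  · exact Function.LeftInverse.injective (g := (· ᵥ* B)) fun v => by
      simp only [vecMul_vecMul, hAB, vecMul_one]
  · have hABx : A *ᵥ B *ᵥ x = 0 := (hker _).mp hx
    rwa [mulVec_mulVec, hAB, one_mulVec] at hABx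

end Compression

section Differences

/-- The matrix of the successive differences `x ↦ (x₁ - x₀, …, xₘ - xₘ₋₁)`; in the paper's notation
it is `I_r T`. -/
def forwardDifference (R : Type*) [Ring R] (m : ℕ) : Matrix (Fin m) (Fin (m + 1)) R :=
  of fun i => Pi.single i.succ 1 - Pi.single i.castSucc 1

lemma forwardDifference_mulVec {R : Type*} [Ring R] {m : ℕ} (x : Fin (m + 1) → R) (i : Fin m) :
    (forwardDifference R m *ᵥ x) i = x i.succ - x i.castSucc := by
  change (Pi.single i.succ 1 - Pi.single i.castSucc 1) ⬝ᵥ x = _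
  rw [sub_dotProduct, single_one_dotProduct, single_one_dotProduct]

lemma forwardDifference_mulVec_eq_zero_iff {R : Type*} [Ring R] {m : ℕ} (x : Fin (m + 1) → R) :
    forwardDifference R m *ᵥ x = 0 ↔ ∃ c, x = fun _ => c := by
  constructor
  · intro h
    have hstep (i : Fin m) : x i.succ = x i.castSucc := by
      rw [← sub_eq_zero, ← forwardDifference_mulVec, h, Pi.zero_apply]
    exact ⟨x 0, funext fun i => Fin.induction rfl (fun i ih => (hstep i).trans ih) i⟩
  · rintro ⟨c, rfl⟩
    ext i
    rw [forwardDifference_mulVec, sub_self, Pi.zero_apply]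

/-- The coordinate transformation `T` of equation (27): the mean of the coordinates, followed by
their successive differences. -/
def meanDifference (F : Type*) [Field F] (m : ℕ) : Matrix (Fin (m + 1)) (Fin (m + 1)) F :=
  of (vecCons (fun _ => 1 / ((m + 1 : ℕ) : F)) (forwardDifference F m))

lemma meanDifference_apply {F : Type*} [Field F] {m : ℕ} (i j : Fin (m + 1)) :
    meanDifference F m i j =
      if (i : ℕ) = 0 then 1 / ((m + 1 : ℕ) : F)
      else if j = i then 1
      else if (j : ℕ) + 1 = (i : ℕ) then -1
      else 0 := by
  cases i using Fin.cases with
  | zero => rfl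
  | succ i =>
    change (Pi.single i.succ 1 - Pi.single i.castSucc 1 : Fin (m + 1) → F) j = _
    simp only [Pi.sub_apply, Pi.single_apply, Fin.ext_iff, Fin.val_succ, Fin.val_castSucc,
      Nat.succ_ne_zero, if_false, add_left_inj]
    split_ifs <;> first | omega | simp

lemma isUnit_meanDifference (F : Type*) [Field F] [CharZero F] (m : ℕ) :
    IsUnit (meanDifference F m) := by
  refine mulVec_injective_iff_isUnit.mp <|
    (injective_iff_map_eq_zero (meanDifference F m).mulVecLin).mpr fun x hx => ?_
  have hdiff : forwardDifference F m *ᵥ x = 0 := funext fun i => congrFun hx i.succ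
  obtain ⟨c, rfl⟩ := (forwardDifference_mulVec_eq_zero_iff x).mp hdiff
  have hmean : (fun _ => 1 / ((m + 1 : ℕ) : F)) ⬝ᵥ (fun _ : Fin (m + 1) => c) = 0 := congrFun hx 0
  have hc : c = 0 := by simpa [dotProduct, Nat.cast_add_one_ne_zero] using hmean
  exact funext fun _ => hc

/-- The matrix `I_r = [0 I]` extracting all coordinates but the first. -/
def dropFirst (R : Type*) [Zero R] [One R] (m : ℕ) : Matrix (Fin m) (Fin (m + 1)) R :=
  (1 : Matrix _ _ R).submatrix Fin.succ id

lemma dropFirst_apply {R : Type*} [Zero R] [One R] {m : ℕ} (i : Fin m) (j : Fin (m + 1)) :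
    dropFirst R m i j = if (j : ℕ) = (i : ℕ) + 1 then 1 else 0 := by
  simp only [dropFirst, submatrix_apply, id_eq, one_apply, Fin.ext_iff, Fin.val_succ, eq_comm]

lemma dropFirst_mul_transpose (R : Type*) [NonAssocSemiring R] (m : ℕ) :
    dropFirst R m * (dropFirst R m)ᵀ = 1 := by
  rw [dropFirst, transpose_submatrix, transpose_one,
    ← submatrix_mul _ _ _ _ _ Function.bijective_id, Matrix.one_mul,
    submatrix_one _ (Fin.succ_injective m)]

lemma dropFirst_mul_meanDifference (F : Type*) [Field F] (m : ℕ) :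
    dropFirst F m * meanDifference F m = forwardDifference F m :=
  one_submatrix_mul Fin.succ (Equiv.refl _) (meanDifference F m)

lemma forwardDifference_mul_inv_meanDifference_mul_transpose (F : Type*) [Field F] [CharZero F]
    (m : ℕ) : forwardDifference F m * ((meanDifference F m)⁻¹ * (dropFirst F m)ᵀ) = 1 := by
  have hdet : IsUnit (meanDifference F m).det :=
    (isUnit_iff_isUnit_det _).mp (isUnit_meanDifference F m)
  rw [← dropFirst_mul_meanDifference, Matrix.mul_assoc, mul_nonsing_inv_cancel_left _ _ hdet,
    dropFirst_mul_transpose]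

end Differences

/-- boundary-layer matrix `R_ζ` of (31c) is Hurwitz: with
`L` the Laplacian (symmetric PSD, kernel exactly `span{1_n}`), `k > 0`,
`τ_v > 0`, `K = (I + k·L)⁻¹`, `T` the transformation matrix (27), and
`I_r = [0 I_{n−1}]`, the matrix `R_ζ = −τ_v⁻¹·I_r·T·(L·K·L)·T⁻¹·I_rᵀ` has all
its (complex) eigenvalues real and negative; in particular it is Hurwitz and
invertible. -/
theorem stmt_13 (n : ℕ) (hn : 2 ≤ n)
    (L : Matrix (Fin n) (Fin n) ℝ)
    (hLsym : L.IsSymm) (hLpsd : L.PosSemidef)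
    (hLker : ∀ x : Fin n → ℝ, L *ᵥ x = 0 ↔ ∃ c : ℝ, x = fun _ => c)
    (k τv : ℝ) (hk : 0 < k) (hτv : 0 < τv)
    (T : Matrix (Fin n) (Fin n) ℝ)
    (hT : ∀ i j : Fin n, T i j =
      if (i : ℕ) = 0 then 1 / (n : ℝ)
      else if j = i then 1
      else if (j : ℕ) + 1 = (i : ℕ) then -1
      else 0)
    (Ir : Matrix (Fin (n - 1)) (Fin n) ℝ)
    (hIr : ∀ (i : Fin (n - 1)) (j : Fin n), Ir i j =
      if (j : ℕ) = (i : ℕ) + 1 then 1 else 0)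
    (Rζ : Matrix (Fin (n - 1)) (Fin (n - 1)) ℝ)
    (hRζ : Rζ = -(τv⁻¹ • (Ir * T * (L * (1 + k • L)⁻¹ * L) * T⁻¹ * Irᵀ))) :
    (∀ μ : ℂ, μ ∈ spectrum ℂ (Rζ.map (Complex.ofReal ·)) → μ.re < 0 ∧ μ.im = 0) ∧
    IsUnit Rζ := by
  obtain ⟨m, rfl⟩ := Nat.exists_eq_add_one_of_ne_zero (show n ≠ 0 by omega)
  obtain rfl : T = meanDifference ℝ m := by ext i j; rw [hT, meanDifference_apply]
  obtain rfl : Ir = dropFirst ℝ m := by ext i j; exact (hIr i j).trans (dropFirst_apply i j).symm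
  rw [dropFirst_mul_meanDifference, Matrix.mul_assoc _ _ (dropFirst ℝ m)ᵀ] at hRζ
  set K := (1 + k • L)⁻¹
  have hK : K.PosDef := (PosDef.one.add_posSemidef (hLpsd.smul hk.le)).inv
  have hform : L * K * L = Lᴴ * K * L := by rw [hLpsd.isHermitian.eq]
  have hLKL : (L * K * L).PosSemidef := hform ▸ hK.posSemidef.conjTranspose_mul_mul_same L
  have hker (x) : (L * K * L) *ᵥ x = 0 ↔ forwardDifference ℝ m *ᵥ x = 0 := by
    rw [hform, conjTranspose_mul_mul_mulVec_eq_zero_iff hK, hLker,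
      forwardDifference_mulVec_eq_zero_iff]
  obtain ⟨P, Q, hP, hQ, hPQ⟩ := exists_posDef_mul_posDef_eq_mul_mul hLKL
    (forwardDifference_mul_inv_meanDifference_mul_transpose ℝ m) hker
  have hP' : (τv⁻¹ • P).PosDef := hP.smul (inv_pos.mpr hτv)
  obtain rfl : Rζ = -(τv⁻¹ • P * Q) := by rw [hRζ, hPQ, smul_mul]
  exact ⟨fun μ hμ => re_neg_and_im_eq_zero_of_mem_spectrum_neg_mul hP' hQ hμ,
    (hP'.isUnit.mul hQ.isUnit).neg⟩
end

section
/- Let n, m ≥ 1. Let R_θ ∈ ℝ^{m×m}, R_{θV} ∈ ℝ^{m×n}, R_{vθ} ∈ ℝ^{n×m}, R_{vV} ∈ ℝ^{n×n}, d_θ ∈ ℝ^m, d_v ∈ ℝ^n, β ∈ ℝ, V⋆ ∈ ℝ^n, and let Δ = diag(Δ_1, …, Δ_n) with Δ_i > 0. For v ∈ ℝ^n set V(v) = V⋆ + Δ·tanh(Δ⁻¹v) (componentwise) and ρ(v)·v the vector with components ρ_i(v_i)·v_i, where ρ_i(v) = |v/Δ_i| − 3 if |v| > 3Δ_i and ρ_i(v)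 = 0 otherwise. Let P_θ ∈ ℝ^{m×m} be symmetric positive definite and D_v ∈ ℝ^{n×n} diagonal positive definite, and define the block matrix Q = [[P_θ·R_θ, P_θ·R_{θV}], [D_v·R_{vθ}, D_v·(R_{vV} − β·I_n)]]. Assume Q + Qᵀ is negative definite and let α_s > 0 be the smallest eigenvalue of −(Q + Qᵀ). Let (r̄, v̄) ∈ ℝ^m × ℝ^n be an equilibrium: 0 = R_θ·r̄ + R_{θV}·V(v̄) + d_θ and 0 = R_{vθ}·r̄ + (R_{vV} − β·I_n)·V(v̄) − ρ(v̄)·v̄ + d_v. Then for every (r, v) ∈ ℝ^m × ℝ^n, writing r̃ = r − r̄, h̃ = V(v) − V(v̄), and η = (r̃, h̃) ∈ ℝ^{m+n}, the Lyapunov derivative expression satisfies r̃ᵀ·P_θ·(R_θ·r + R_{θV}·V(v) + d_θ) + h̃ᵀ·D_v·(R_{vθ}·r + (R_{vV} − β·I_n)·V(v) − ρ(v)·v + d_v) ≤ −(α_s/2)·‖η‖². -/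
open Matrix

/-- The nonlinear leakage (anti-windup) coefficient `ρ` of the integral
controller (4c): `ρ(v) = |v/Δ| − 3` if `|v| > 3Δ`, and `0` otherwise. -/
noncomputable def leak (Δ v : ℝ) : ℝ := if 3 * Δ < |v| then |v / Δ| - 3 else 0

/-!
Subtracting the equilibrium equations makes the dynamics linear in `η = (r̃, h̃)` up to the
leakage difference, so the Lyapunov derivative is `ηᵀQη − h̃ᵀD_v(ρ(v)v − ρ(v̄)v̄)`. Saturation and
leakage are both nondecreasing in each component, so the leakage term only helps; and
`ηᵀQη = ½ηᵀ(Q + Qᵀ)η ≤ −(α/2)‖η‖²` for any lower bound `α` of the spectrum of `−(Q + Qᵀ)`.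
-/

section Monotonicity

lemma monotone_mul_self_of_even {R : Type*} [CommRing R] [LinearOrder R] [IsStrictOrderedRing R]
    {f : R → R} (heven : Function.Even f) (hmono : MonotoneOn f (Set.Ici 0)) (h0 : 0 ≤ f 0) :
    Monotone fun x ↦ f x * x := by
  refine monotone_of_odd_of_monotoneOn_nonneg (fun x ↦ by rw [heven x, mul_neg]) ?_
  have hnonneg : ∀ x ∈ Set.Ici (0 : R), 0 ≤ f x := fun x hx ↦
    h0.trans (hmono Set.self_mem_Ici hx hx)
  exact hmono.mul monotoneOn_id hnonneg fun _ hx ↦ hx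

lemma leak_eq_max {Δ : ℝ} (hΔ : 0 < Δ) (v : ℝ) : leak Δ v = max (|v| / Δ - 3) 0 := by
  rw [leak, abs_div, abs_of_pos hΔ]
  split_ifs with h
  · exact (max_eq_left (sub_nonneg.2 ((le_div_iff₀ hΔ).2 h.le))).symm
  · exact (max_eq_right (sub_nonpos.2 ((div_le_iff₀ hΔ).2 (not_lt.1 h)))).symm

lemma leak_even (Δ : ℝ) : Function.Even (leak Δ) := fun v ↦ by
  simp only [leak, abs_neg, neg_div]

lemma leak_nonneg {Δ : ℝ} (hΔ : 0 < Δ) (v : ℝ) : 0 ≤ leak Δ v :=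
  leak_eq_max hΔ v ▸ le_max_right _ _

lemma monotoneOn_leak {Δ : ℝ} (hΔ : 0 < Δ) : MonotoneOn (leak Δ) (Set.Ici 0) := by
  intro x hx y hy hxy
  rw [leak_eq_max hΔ, leak_eq_max hΔ, abs_of_nonneg hx, abs_of_nonneg hy]
  gcongr

lemma monotone_leak_mul_self {Δ : ℝ} (hΔ : 0 < Δ) : Monotone fun v ↦ leak Δ v * v :=
  monotone_mul_self_of_even (leak_even Δ) (monotoneOn_leak hΔ) (leak_nonneg hΔ 0)

lemma monotone_tanh : Monotone Real.tanh := fun x y hxy ↦ by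
  rwa [← Real.artanh_le_artanh_iff (Real.tanh_bijOn.mapsTo trivial)
    (Real.tanh_bijOn.mapsTo trivial), Real.artanh_tanh, Real.artanh_tanh]

lemma monotone_add_mul_tanh_div (c : ℝ) {Δ : ℝ} (hΔ : 0 ≤ Δ) :
    Monotone fun v ↦ c + Δ * Real.tanh (v / Δ) := fun x y hxy ↦ by
  have htanh := monotone_tanh (div_le_div_of_nonneg_right hxy hΔ)
  dsimp only
  gcongr

lemma monovary_saturation_leak {X : Type*} (c : ℝ) {Δ : ℝ} (hΔ : 0 < Δ) (v : X → ℝ) :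
    Monovary (fun x ↦ c + Δ * Real.tanh (v x / Δ)) (fun x ↦ leak Δ (v x) * v x) :=
  ((monotone_add_mul_tanh_div c hΔ.le).monovary (monotone_leak_mul_self hΔ)).comp_right v

end Monotonicity

section QuadraticForms

variable {ι κ : Type*} [Fintype ι] [Fintype κ]

lemma dotProduct_diagonal_mulVec_nonneg {R : Type*} [CommSemiring R] [PartialOrder R]
    [IsOrderedRing R] [DecidableEq κ] {w x y : κ → R} (hw : 0 ≤ w) (hxy : ∀ i, 0 ≤ x i * y i) :
    0 ≤ x ⬝ᵥ (diagonal w *ᵥ y) := by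
  refine Finset.sum_nonneg fun i _ ↦ ?_
  rw [mulVec_diagonal, mul_left_comm]
  exact mul_nonneg (hw i) (hxy i)

lemma sumElim_dotProduct_fromBlocks_mulVec_sumElim {ι' κ' R : Type*} [Fintype ι'] [Fintype κ']
    [NonUnitalNonAssocSemiring R] (A : Matrix ι ι' R) (B : Matrix ι κ' R) (C : Matrix κ ι' R)
    (D : Matrix κ κ' R) (u : ι → R) (v : κ → R) (x : ι' → R) (y : κ' → R) :
    Sum.elim u v ⬝ᵥ (fromBlocks A B C D *ᵥ Sum.elim x y) =
      u ⬝ᵥ (A *ᵥ x + B *ᵥ y) + v ⬝ᵥ (C *ᵥ x + D *ᵥ y) := by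
  rw [fromBlocks_mulVec, sumElim_dotProduct_sumElim, Sum.elim_comp_inl, Sum.elim_comp_inr]

lemma dotProduct_add_transpose_mulVec_self {R : Type*} [CommSemiring R] (Q : Matrix ι ι R)
    (x : ι → R) : x ⬝ᵥ ((Q + Qᵀ) *ᵥ x) = 2 * (x ⬝ᵥ (Q *ᵥ x)) := by
  rw [add_mulVec, dotProduct_add, dotProduct_transpose_mulVec, two_mul]

open scoped MatrixOrder in
lemma mul_dotProduct_self_le_dotProduct_mulVec [DecidableEq ι] {A : Matrix ι ι ℝ}
    (hA : A.IsHermitian) {a : ℝ} (ha : a ∈ lowerBounds (spectrum ℝ A)) (x : ι → ℝ) :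
    a * (x ⬝ᵥ x) ≤ x ⬝ᵥ (A *ᵥ x) := by
  have hle : algebraMap ℝ (Matrix ι ι ℝ) a ≤ A :=
    algebraMap_le_of_le_spectrum (fun _ hμ ↦ ha hμ) hA.isSelfAdjoint
  have hform : 0 ≤ x ⬝ᵥ ((A - algebraMap ℝ (Matrix ι ι ℝ) a) *ᵥ x) :=
    (Matrix.le_iff.1 hle).dotProduct_mulVec_nonneg x
  rwa [Algebra.algebraMap_eq_smul_one, sub_mulVec, smul_mulVec, one_mulVec, dotProduct_sub,
    dotProduct_smul, smul_eq_mul, sub_nonneg] at hform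

lemma dotProduct_mulVec_self_le_of_mem_lowerBounds_spectrum [DecidableEq ι] {Q : Matrix ι ι ℝ}
    {α : ℝ} (hα : α ∈ lowerBounds (spectrum ℝ (-(Q + Qᵀ)))) (x : ι → ℝ) :
    x ⬝ᵥ (Q *ᵥ x) ≤ -(α / 2) * (x ⬝ᵥ x) := by
  have hsymm : (-(Q + Qᵀ)).IsHermitian := (isHermitian_add_transpose_self Q).neg
  have hform := mul_dotProduct_self_le_dotProduct_mulVec hsymm hα x
  rw [neg_mulVec, dotProduct_neg, dotProduct_add_transpose_mulVec_self] at hform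
  linarith

end QuadraticForms

/-- Here `X` is the state space of the voltage controller, `V v` is the saturated voltage and
`L v` is the leakage vector, written `ρ(v)v` in the paper. -/
theorem stmt_17_general {X ι κ : Type*} [Fintype ι] [Fintype κ] [DecidableEq ι] [DecidableEq κ]
    (Rθ : Matrix ι ι ℝ) (RθV : Matrix ι κ ℝ) (Rvθ : Matrix κ ι ℝ) (RvV : Matrix κ κ ℝ)
    (dθ : ι → ℝ) (dv : κ → ℝ) (V L : X → κ → ℝ) (hVL : ∀ i, Monovary (V · i) (L · i))
    (P : Matrix ι ι ℝ) {w : κ → ℝ} (hw : 0 ≤ w) {α : ℝ} {Q : Matrix (ι ⊕ κ) (ι ⊕ κ) ℝ}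
    (hQ : Q = fromBlocks (P * Rθ) (P * RθV) (diagonal w * Rvθ) (diagonal w * RvV))
    (hα : α ∈ lowerBounds (spectrum ℝ (-(Q + Qᵀ))))
    {rbar : ι → ℝ} {vbar : X} (hθ : 0 = Rθ *ᵥ rbar + RθV *ᵥ V vbar + dθ)
    (hv : 0 = Rvθ *ᵥ rbar + RvV *ᵥ V vbar - L vbar + dv) (r : ι → ℝ) (v : X) :
    (r - rbar) ⬝ᵥ (P *ᵥ (Rθ *ᵥ r + RθV *ᵥ V v + dθ))
        + (V v - V vbar) ⬝ᵥ (diagonal w *ᵥ (Rvθ *ᵥ r + RvV *ᵥ V v - L v + dv))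
      ≤ -(α / 2) *
        (Sum.elim (r - rbar) (V v - V vbar) ⬝ᵥ Sum.elim (r - rbar) (V v - V vbar)) := by
  set x := r - rbar with hx
  set h := V v - V vbar with hh
  have hθ_error : Rθ *ᵥ r + RθV *ᵥ V v + dθ = Rθ *ᵥ x + RθV *ᵥ h := by
    rw [← sub_zero (_ + dθ), hθ, hx, hh, mulVec_sub, mulVec_sub]
    abel
  have hv_error : Rvθ *ᵥ r + RvV *ᵥ V v - L v + dv =
      Rvθ *ᵥ x + RvV *ᵥ h - (L v - L vbar) := by
    rw [← sub_zero (_ + dv), hv, hx, hh, mulVec_sub, mulVec_sub]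
    abel
  have hleak : 0 ≤ h ⬝ᵥ (diagonal w *ᵥ (L v - L vbar)) :=
    dotProduct_diagonal_mulVec_nonneg hw fun i ↦ (hVL i).sub_mul_sub_nonneg vbar v
  calc x ⬝ᵥ (P *ᵥ (Rθ *ᵥ r + RθV *ᵥ V v + dθ))
        + h ⬝ᵥ (diagonal w *ᵥ (Rvθ *ᵥ r + RvV *ᵥ V v - L v + dv))
      = Sum.elim x h ⬝ᵥ (Q *ᵥ Sum.elim x h) - h ⬝ᵥ (diagonal w *ᵥ (L v - L vbar)) := by
        rw [hθ_error, hv_error, hQ, sumElim_dotProduct_fromBlocks_mulVec_sumElim,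
          mulVec_sub (diagonal w), dotProduct_sub, ← add_sub_assoc]
        simp only [mulVec_add, mulVec_mulVec]
    _ ≤ Sum.elim x h ⬝ᵥ (Q *ᵥ Sum.elim x h) := sub_le_self _ hleak
    _ ≤ -(α / 2) * (Sum.elim x h ⬝ᵥ Sum.elim x h) :=
        dotProduct_mulVec_self_le_of_mem_lowerBounds_spectrum hα _

/-- Lyapunov decrease estimate (35a)–(38) in the proof of
Theorem 1: for the reduced slow dynamics with saturated voltage
`V(v) = V⋆ + Δ·tanh(Δ⁻¹v)`, if `P_θ ≻ 0` is symmetric, `D_v ≻ 0` is diagonal,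
the block matrix `Q = [[P_θR_θ, P_θR_{θV}],[D_vR_{vθ}, D_v(R_{vV} − βI)]]`
satisfies `Q + Qᵀ ≺ 0` with smallest eigenvalue of `−(Q+Qᵀ)` equal to
`α_s > 0`, and `(r̄, v̄)` is an equilibrium, then for every `(r, v)`, writing
`r̃ = r − r̄`, `h̃ = V(v) − V(v̄)`, `η = (r̃, h̃)`, the Lyapunov derivative
satisfies
`r̃ᵀP_θ(R_θr + R_{θV}V(v) + d_θ) + h̃ᵀD_v(R_{vθ}r + (R_{vV} − βI)V(v) − ρ(v)v + d_v) ≤ −(α_s/2)‖η‖²`. -/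
theorem stmt_17 (n m : ℕ) (hn : 1 ≤ n) (hm : 1 ≤ m)
    (Rθ : Matrix (Fin m) (Fin m) ℝ) (RθV : Matrix (Fin m) (Fin n) ℝ)
    (Rvθ : Matrix (Fin n) (Fin m) ℝ) (RvV : Matrix (Fin n) (Fin n) ℝ)
    (dθ : Fin m → ℝ) (dv : Fin n → ℝ) (β : ℝ)
    (Vstar : Fin n → ℝ) (Δ : Fin n → ℝ) (hΔ : ∀ i, 0 < Δ i)
    -- the componentwise saturated voltage map and leakage term
    (Vfun : (Fin n → ℝ) → (Fin n → ℝ))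
    (hVfun : ∀ v i, Vfun v i = Vstar i + Δ i * Real.tanh (v i / Δ i))
    (ρv : (Fin n → ℝ) → (Fin n → ℝ))
    (hρv : ∀ v i, ρv v i = leak (Δ i) (v i) * v i)
    -- the Lyapunov matrices
    (Pθ : Matrix (Fin m) (Fin m) ℝ) (hPθ : Pθ.PosDef)
    (dvec : Fin n → ℝ) (hdvec : ∀ i, 0 < dvec i)
    (Dv : Matrix (Fin n) (Fin n) ℝ) (hDv : Dv = Matrix.diagonal dvec)
    -- the block matrix `Q` and the LMI `Q + Qᵀ ≺ 0`
    (Q : Matrix (Fin m ⊕ Fin n) (Fin m ⊕ Fin n) ℝ)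
    (hQdef : Q = Matrix.fromBlocks (Pθ * Rθ) (Pθ * RθV)
      (Dv * Rvθ) (Dv * (RvV - β • (1 : Matrix (Fin n) (Fin n) ℝ))))
    (hLMI : (-(Q + Qᵀ)).PosDef)
    -- `α_s > 0` is the smallest eigenvalue of `−(Q + Qᵀ)`
    (αs : ℝ) (hαs : 0 < αs)
    (hαs_mem : αs ∈ spectrum ℝ (-(Q + Qᵀ)))
    (hαs_min : ∀ μ ∈ spectrum ℝ (-(Q + Qᵀ)), αs ≤ μ)
    -- `(r̄, v̄)` is an equilibrium of the reduced slow dynamics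
    (rbar : Fin m → ℝ) (vbar : Fin n → ℝ)
    (heq1 : (0 : Fin m → ℝ) = Rθ *ᵥ rbar + RθV *ᵥ Vfun vbar + dθ)
    (heq2 : (0 : Fin n → ℝ) = Rvθ *ᵥ rbar
      + (RvV - β • (1 : Matrix (Fin n) (Fin n) ℝ)) *ᵥ Vfun vbar - ρv vbar + dv) :
    ∀ (r : Fin m → ℝ) (v : Fin n → ℝ),
      (r - rbar) ⬝ᵥ (Pθ *ᵥ (Rθ *ᵥ r + RθV *ᵥ Vfun v + dθ))
      + (Vfun v - Vfun vbar) ⬝ᵥ (Dv *ᵥ (Rvθ *ᵥ r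
          + (RvV - β • (1 : Matrix (Fin n) (Fin n) ℝ)) *ᵥ Vfun v - ρv v + dv))
      ≤ -(αs / 2) *
          (Sum.elim (r - rbar) (Vfun v - Vfun vbar) ⬝ᵥ
           Sum.elim (r - rbar) (Vfun v - Vfun vbar)) := by
  have hVρ (i : Fin n) : Monovary (Vfun · i) (ρv · i) := by
    simpa only [hVfun, hρv] using
      monovary_saturation_leak (Vstar i) (hΔ i) fun v : Fin n → ℝ ↦ v i
  subst hDv
  exact stmt_17_general Rθ RθV Rvθ _ dθ dv Vfun ρv hVρ Pθ (fun i ↦ (hdvec i).le) hQdef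
    hαs_min heq1 heq2
end
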